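/- arXiv:1207.4331 — 3 statements merged into one kernel-verified Lean document; each statement's English description precedes it below -/
import Mathlib

section
/- For a real number a \ne 0, define the normalized Charlier polynomials c_n^a(x) = \frac{1}{n!} \sum_{j=0}^n (-a)^{n-j} \binom{n}{j} \binom{x}{j} j!. Then for all natural numbers n, m and every real x: \det\big( c^a_{m+j-1}(x+i-1) \big)_{i,j=1}^n = (-1)^{nm} \det\big( c^{-a}_{n+j-1}(-x+i-1) \big)_{i,j=1}^m, where the determinant of a 0\times 0 matrix equals 1. -/
/-- The generalized binomial coefficient `x choose j = x(x-1)⋯(x-j+1)/j!`. -/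
noncomputable def gbinom (x : ℝ) (j : ℕ) : ℝ :=
  (∏ k ∈ Finset.range j, (x - k)) / j.factorial

/-- The normalized Charlier polynomial
`c_n^a(x) = (1/n!) ∑_{j=0}^n (-a)^{n-j} C(n,j) C(x,j) j!`. -/
noncomputable def charlier (a : ℝ) (n : ℕ) (x : ℝ) : ℝ :=
  (1 / n.factorial) * ∑ j ∈ Finset.range (n + 1),
    (-a) ^ (n - j) * (n.choose j : ℝ) * gbinom x j * j.factorial

section CharlierAux
open PowerSeries Matrix Finset

lemma gbinom_eq (x : ℝ) (j : ℕ) : gbinom x j = Ring.choose x j := by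
  rw [Ring.choose_eq_smul, gbinom, ← descPochhammer_eval_eq_prod_range,
    ← Polynomial.aeval_eq_smeval, ← descPochhammer_map (algebraMap ℤ ℝ),
    Polynomial.eval_map_algebraMap, smul_eq_mul, div_eq_inv_mul]

noncomputable def FF (a x : ℝ) : PowerSeries ℝ :=
  PowerSeries.binomialSeries ℝ x * rescale (-a) (PowerSeries.exp ℝ)

lemma coeff_FF (a x : ℝ) (n : ℕ) : coeff n (FF a x) = charlier a n x := by
  rw [FF, coeff_mul, Finset.Nat.sum_antidiagonal_eq_sum_range_succ_mk, charlier, Finset.mul_sum]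
  refine Finset.sum_congr rfl fun j hj => ?_
  have hj : j ≤ n := by simpa [Nat.lt_succ_iff] using hj
  rw [binomialSeries_coeff, coeff_rescale, coeff_exp, gbinom_eq, Nat.cast_choose ℝ hj]
  have h1 : (n.factorial : ℝ) ≠ 0 := by positivity
  have h2 : (j.factorial : ℝ) ≠ 0 := by positivity
  have h3 : ((n-j).factorial : ℝ) ≠ 0 := by positivity
  simp only [smul_eq_mul, map_div₀, map_one, map_natCast]
  field_simp

lemma FF_mul (a x : ℝ) : FF a x * FF (-a) (-x) = 1 := by
  have h1 := exp_mul_exp_eq_exp_add (-a) a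
  have h2 := binomialSeries_add (A := ℝ) x (-x)
  have h3 : rescale (-a + a) (PowerSeries.exp ℝ) = 1 := by simp
  rw [add_neg_cancel, binomialSeries_zero] at h2
  rw [FF, FF, neg_neg, mul_mul_mul_comm, ← h2, h1, h3, one_mul]

lemma FF_shift (a x : ℝ) (i : ℕ) : FF a (x + i) = (1 + X) ^ i * FF a x := by
  rw [FF, FF, binomialSeries_add, binomialSeries_nat]; ring

lemma FF_const (a x : ℝ) : coeff 0 (FF a x) = 1 := by
  rw [coeff_FF]; simp [charlier, gbinom]

noncomputable def tt (G : PowerSeries ℝ) (i j : ℕ) : ℝ := coeff j (X ^ i * G)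

lemma tt_mul (G H : PowerSeries ℝ) (N i j : ℕ) (hj : j < N) :
    ∑ k ∈ range N, tt G i k * tt H k j = tt (G * H) i j := by
  simp only [tt]
  rw [← mul_assoc, coeff_mul, Finset.Nat.sum_antidiagonal_eq_sum_range_succ_mk]
  symm
  have : ∀ k ∈ range (j+1), coeff k (X ^ i * G) * coeff (j - k) H
      = coeff k (X ^ i * G) * coeff j (X ^ k * H) := by
    intro k hk
    rw [coeff_X_pow_mul' H, if_pos (by simpa [Nat.lt_succ_iff] using hk)]
  rw [Finset.sum_congr rfl this]
  apply Finset.sum_subset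
  · intro k; simp only [mem_range]; omega
  · intro k _ hk
    rw [coeff_X_pow_mul' H, if_neg (by simpa [Nat.lt_succ_iff] using hk), mul_zero]

lemma tt_one (i j : ℕ) : tt 1 i j = if j = i then 1 else 0 := by
  simp [tt, coeff_X_pow]

lemma rot_pow (N k : ℕ) (i : Fin N) : (((finRotate N) ^ k) i).val = (i.val + k) % N := by
  induction k with
  | zero => simp [Nat.mod_eq_of_lt i.2]
  | succ k ih =>
    obtain ⟨M, rfl⟩ : ∃ M, N = M + 1 := ⟨N - 1, by have := i.2; omega⟩
    rw [pow_succ', Equiv.Perm.mul_apply, finRotate_apply, Fin.val_add, ih]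
    rw [Fin.val_one', ← Nat.add_mod, add_assoc]

lemma sign_val (m n : ℕ) : ((-1 : ℝ) ^ (m + n - 1)) ^ n = (-1) ^ (n * m) := by
  cases n with
  | zero => simp
  | succ k =>
    rw [← pow_mul, show (m + (k+1) - 1) * (k+1) = (k+1) * m + k * (k+1) by
      rw [show m + (k+1) - 1 = m + k by omega]; ring, pow_add,
      (Nat.even_mul_succ_self k).neg_one_pow, mul_one]

lemma duality (G H : PowerSeries ℝ) (hGH : G * H = 1) (h0 : coeff 0 G = 1) (n m : ℕ) :
    (Matrix.of fun i j : Fin n => tt G i (m + j)).det =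
    (-1) ^ (n * m) * (Matrix.of fun i j : Fin m => tt H i (n + j)).det := by
  let T : Matrix (Fin (m+n)) (Fin (m+n)) ℝ := Matrix.of fun i j => tt G i j
  have hT : T.det = 1 := by
    rw [Matrix.det_of_isUpperTriangular]
    · apply Finset.prod_eq_one
      intro i _
      simp [T, tt, coeff_X_pow_mul', -coeff_zero_eq_constantCoeff, h0]
    · intro i j hij
      have : j.val < i.val := hij
      simp only [T, of_apply, tt]
      rw [coeff_X_pow_mul', if_neg (by omega)]
  let T' : Matrix (Fin m ⊕ Fin n) (Fin m ⊕ Fin n) ℝ :=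
    fromBlocks (of fun i j => tt G (n + i) j) (of fun i j => tt G (n + i) (m + j))
      (of fun i j => tt G i j) (of fun i j => tt G i (m + j))
  have hT' : T' = ((T.submatrix ((finRotate (m+n)) ^ n) id).submatrix
      finSumFinEquiv finSumFinEquiv) := by
    ext i j
    have hr : ∀ i : Fin n, (m + i.val + n) % (m + n) = i := by
      intro i
      rw [show m + i.val + n = i + (m + n) by ring, Nat.add_mod_right,
        Nat.mod_eq_of_lt (by omega)]
    have hl : ∀ i : Fin m, (i.val + n) % (m + n) = n + i := by
      intro i
      rw [Nat.mod_eq_of_lt (by omega), add_comm]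
    rcases i with i | i <;> rcases j with j | j <;>
      simp [T', T, rot_pow, hr, hl]
  have hdet : T'.det = (-1) ^ (n * m) := by
    rw [hT', det_submatrix_equiv_self, det_permute, hT, map_pow, sign_finRotate, ← sign_val]
    simp
  have key : T' * fromBlocks (of fun i j : Fin m => tt H i (n + j)) 0
      (of fun (i : Fin n) (j : Fin m) => tt H (m + i) (n + j)) 1
      = fromBlocks 1 (of fun (i : Fin m) (j : Fin n) => tt G (n + i) (m + j)) 0
        (of fun (i j : Fin n) => tt G i (m + j)) := by
    have hs : ∀ (r : ℕ) (j : Fin m), ∑ k : Fin m, tt G r k * tt H k (n + j) +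
        ∑ k : Fin n, tt G r (m + k) * tt H (m + k) (n + j) = tt 1 r (n + j) := by
      intro r j
      rw [← hGH, ← tt_mul G H (m + n) r (n + j) (by omega), Finset.sum_range_add,
        ← Fin.sum_univ_eq_sum_range (fun k => tt G r k * tt H k (n + j)),
        ← Fin.sum_univ_eq_sum_range (fun k => tt G r (m + k) * tt H (m + k) (n + j))]
    rw [fromBlocks_multiply]
    congr 1
    · ext i j
      simp only [Matrix.add_apply, mul_apply, of_apply, hs, tt_one, one_apply]
      simp [Fin.ext_iff, eq_comm]
    · simp
    · ext i j
      simp only [Matrix.add_apply, mul_apply, of_apply, hs, tt_one, Matrix.zero_apply]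
      rw [if_neg (by omega)]
    · simp
  have := congrArg Matrix.det key
  rw [det_mul, det_fromBlocks_zero₁₂, det_fromBlocks_zero₂₁, hdet, det_one, det_one] at this
  rw [mul_one, one_mul] at this
  exact this.symm

lemma casorati (a x : ℝ) (n m : ℕ) :
    (Matrix.of fun i j : Fin n => charlier a (m + (j : ℕ)) (x + (i : ℕ))).det =
    (Matrix.of fun i j : Fin n => tt (FF a x) i (m + j)).det := by
  have hL : (Matrix.of fun i k : Fin n => ((i.val.choose k.val : ℕ) : ℝ)).det = 1 := by
    rw [Matrix.det_of_isLowerTriangular]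
    · simp
    · intro i j hij
      have : i.val < j.val := hij
      simp [Nat.choose_eq_zero_of_lt this]
  rw [← one_mul (Matrix.det (Matrix.of fun i j : Fin n => tt (FF a x) i (m + j))), ← hL,
    ← det_mul]
  congr 1
  ext i j
  simp only [of_apply, mul_apply]
  rw [Fin.sum_univ_eq_sum_range (fun k => ((i.val.choose k : ℕ) : ℝ) * tt (FF a x) k (m + j)),
    ← coeff_FF, FF_shift, add_comm (1 : PowerSeries ℝ), add_pow, Finset.sum_mul, map_sum]
  have : ∀ k ∈ range (i.val + 1), coeff (m + j.val)
      (X ^ k * 1 ^ (i.val - k) * ((i.val.choose k : ℕ) : PowerSeries ℝ) * FF a x)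
      = ((i.val.choose k : ℕ) : ℝ) * tt (FF a x) k (m + j) := by
    intro k _
    rw [one_pow, mul_one, tt, mul_right_comm, mul_comm, ← nsmul_eq_mul, map_nsmul, nsmul_eq_mul]
  rw [Finset.sum_congr rfl this]
  apply Finset.sum_subset
  · intro k; simp only [mem_range]; omega
  · intro k _ hk
    rw [Nat.choose_eq_zero_of_lt (by simpa [Nat.lt_succ_iff] using hk)]; simp

end CharlierAux

/-- the symmetry of Casorati determinants of Charlier
polynomials. -/
theorem charlier_casorati_symmetry (a : ℝ) (ha : a ≠ 0) (n m : ℕ) (x : ℝ) :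
    Matrix.det (Matrix.of fun i j : Fin n =>
      charlier a (m + (j : ℕ)) (x + (i : ℕ)))
    = (-1 : ℝ) ^ (n * m) *
      Matrix.det (Matrix.of fun i j : Fin m =>
        charlier (-a) (n + (j : ℕ)) (-x + (i : ℕ))) := by
  rw [casorati, casorati]
  exact duality _ _ (FF_mul a x) (FF_const a x) n m
end

section
/- For real numbers a \notin \{0, 1\} and c, define the normalized Meixner polynomials \mathsf{m}_n^{a,c}(x) = \frac{1}{n!} \sum_{j=0}^n (c+j)_{n-j} \, (1 - 1/a)^{j-n} \binom{n}{j} \binom{x}{j} j!. Then for all natural numbers n, m, every real c and every real x: \det\big( \mathsf{m}^{a, c-n-m}_{m+j-1}(x+i-1) \big)_{i,j=1}^n = (-1)^{nm} \det\big( \mathsf{m}^{a, 2-c}_{n+j-1}(-x+i-1) \big)_{i,j=1}^m, where the determinant of a 0\times 0 matrix equals 1. -/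
/-- The Pochhammer symbol `(y)_l = y (y+1) ⋯ (y+l-1)`. -/
noncomputable def poch (y : ℝ) (l : ℕ) : ℝ := ∏ k ∈ Finset.range l, (y + k)

/-- The normalized Meixner polynomial
`m_n^{a,c}(x) = (1/n!) ∑_{j=0}^n (c+j)_{n-j} (1-1/a)^{j-n} C(n,j) C(x,j) j!`. -/
noncomputable def meixner (a c : ℝ) (n : ℕ) (x : ℝ) : ℝ :=
  (1 / n.factorial) * ∑ j ∈ Finset.range (n + 1),
    poch (c + j) (n - j) * (1 - 1 / a) ^ ((j : ℤ) - n) * (n.choose j : ℝ) *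
      gbinom x j * j.factorial

lemma rot_val (N : ℕ) (i : ℕ) (p : Fin N) : (((finRotate N) ^ i) p : ℕ) = ((p : ℕ) + i) % N := by
  induction i with
  | zero => simp [Nat.mod_eq_of_lt p.2]
  | succ i ih =>
    rw [pow_succ', Equiv.Perm.mul_apply]
    cases N with
    | zero => exact p.elim0
    | succ k =>
      rw [finRotate_apply, Fin.val_add, ih, Fin.val_one']
      rw [← Nat.add_mod, add_assoc]

lemma sign_rot (n m : ℕ) :
    (((Equiv.Perm.sign ((finRotate (n + m)) ^ m) : ℤˣ) : ℤ) : ℝ) = (-1) ^ (n * m) := by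
  rw [map_pow, sign_finRotate]
  push_cast
  rw [← pow_mul]
  rcases m with _ | k
  · simp
  · have : (n + (k + 1) - 1) * (k + 1) = n * (k + 1) + k * (k + 1) := by
      rw [show n + (k + 1) - 1 = n + k by omega]; ring
    rw [this, pow_add, (Nat.even_mul_succ_self k).neg_one_pow, mul_one]

/-- upper triangular Toeplitz matrix -/
noncomputable def toep (N : ℕ) (G : PowerSeries ℝ) : Matrix (Fin N) (Fin N) ℝ :=
  Matrix.of fun i j => PowerSeries.coeff (j : ℕ) (PowerSeries.X ^ (i : ℕ) * G)

lemma toep_mul (N : ℕ) (G F : PowerSeries ℝ) (h : G * F = 1) : toep N G * toep N F = 1 := by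
  ext i j
  rw [Matrix.mul_apply]
  have h1 : ∑ k : Fin N, toep N G i k * toep N F k j
      = PowerSeries.coeff (j : ℕ) (PowerSeries.X ^ (i : ℕ) * G * F) := by
    simp only [toep, Matrix.of_apply]
    rw [Fin.sum_univ_eq_sum_range (fun k => PowerSeries.coeff k (PowerSeries.X ^ (i : ℕ) * G) *
      PowerSeries.coeff (j : ℕ) (PowerSeries.X ^ k * F)) N, PowerSeries.coeff_mul,
      Finset.Nat.sum_antidiagonal_eq_sum_range_succ_mk]
    symm
    have : Finset.range (j : ℕ).succ ⊆ Finset.range N := by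
      intro t; simp; have := j.2; omega
    rw [← Finset.sum_subset this]
    · refine Finset.sum_congr rfl fun k hk => ?_
      simp only [Finset.mem_range] at hk
      rw [PowerSeries.coeff_X_pow_mul' F, if_pos (by omega : k ≤ (j : ℕ))]
    · intro k _ hk
      simp only [Finset.mem_range] at hk
      rw [PowerSeries.coeff_X_pow_mul' F, if_neg (by omega), mul_zero]
  rw [h1, mul_assoc, h, mul_one, PowerSeries.coeff_X_pow, Matrix.one_apply]
  simp [Fin.ext_iff, eq_comm]

lemma toep_det (N : ℕ) (G : PowerSeries ℝ) (h : PowerSeries.constantCoeff G = 1) :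
    (toep N G).det = 1 := by
  rw [Matrix.det_of_isUpperTriangular]
  · apply Finset.prod_eq_one
    intro i _
    simp [toep, PowerSeries.coeff_X_pow_mul', h]
  · intro i j hij
    simp only [id] at hij
    simp only [toep, Matrix.of_apply]
    rw [PowerSeries.coeff_X_pow_mul', if_neg (by simpa using hij)]

lemma dual_jt (n m : ℕ) (G F : PowerSeries ℝ) (h : G * F = 1)
    (h0 : PowerSeries.constantCoeff G = 1) :
    Matrix.det (Matrix.of fun i j : Fin n =>
      PowerSeries.coeff (m + (j : ℕ)) (PowerSeries.X ^ (i : ℕ) * G))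
    = (-1 : ℝ) ^ (n * m) * Matrix.det (Matrix.of fun i j : Fin m =>
      PowerSeries.coeff (n + (j : ℕ)) (PowerSeries.X ^ (i : ℕ) * F)) := by
  set T := toep (n + m) G with hT
  set S := toep (n + m) F with hS
  have hTS : T * S = 1 := toep_mul _ _ _ h
  let σ := (finRotate (n + m)) ^ m
  have hσ1 : ∀ p : Fin n, σ (Fin.castAdd m p) = ⟨m + p, by omega⟩ := by
    intro p
    apply Fin.ext
    rw [rot_val]
    simp only [Fin.val_castAdd]
    rw [Nat.mod_eq_of_lt (by omega)]; omega
  have hσ2 : ∀ p : Fin m, σ (Fin.natAdd n p) = ⟨p, by omega⟩ := by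
    intro p
    apply Fin.ext
    rw [rot_val]
    simp only [Fin.val_natAdd]
    rw [show n + (p : ℕ) + m = p + (n + m) by ring, Nat.add_mod_right,
      Nat.mod_eq_of_lt (by omega)]
  let W : Matrix (Fin (n + m)) (Fin (n + m)) ℝ := Matrix.of fun p q =>
    if (q : ℕ) < n then (1 : Matrix (Fin (n + m)) (Fin (n + m)) ℝ) p (σ q) else S p q
  have hTW : T * W = Matrix.of fun p q : Fin (n + m) => if (q : ℕ) < n then T p (σ q) else
      (1 : Matrix (Fin (n + m)) (Fin (n + m)) ℝ) p q := by
    ext p q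
    rw [Matrix.mul_apply]
    simp only [W, Matrix.of_apply]
    by_cases hq : (q : ℕ) < n
    · simp [hq, Matrix.one_apply]
    · simp only [hq, if_false]
      rw [← hTS, Matrix.mul_apply]
  have hdV : (T * W).det = Matrix.det (Matrix.of fun i j : Fin n =>
      PowerSeries.coeff (m + (j : ℕ)) (PowerSeries.X ^ (i : ℕ) * G)) := by
    rw [hTW, ← Matrix.det_submatrix_equiv_self (finSumFinEquiv (m := n) (n := m)),
      ← Matrix.fromBlocks_toBlocks (Matrix.submatrix _ _ _)]
    have e12 : (Matrix.submatrix (Matrix.of fun p q : Fin (n + m) => if (q : ℕ) < n then T p (σ q) else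
      (1 : Matrix (Fin (n + m)) (Fin (n + m)) ℝ) p q) finSumFinEquiv finSumFinEquiv).toBlocks₁₂ = 0 := by
      ext i j
      simp [Matrix.toBlocks₁₂, Matrix.one_apply, Fin.ext_iff]
      omega
    have e22 : (Matrix.submatrix (Matrix.of fun p q : Fin (n + m) => if (q : ℕ) < n then T p (σ q) else
      (1 : Matrix (Fin (n + m)) (Fin (n + m)) ℝ) p q) finSumFinEquiv finSumFinEquiv).toBlocks₂₂ = 1 := by
      ext i j
      simp [Matrix.toBlocks₂₂, Matrix.one_apply, Fin.ext_iff]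
    rw [e12, e22, Matrix.det_fromBlocks_zero₁₂, Matrix.det_one, mul_one]
    congr 1
    ext i j
    simp [Matrix.toBlocks₁₁, hσ1, hT, toep]
  have hdW : (W.submatrix σ id).det = Matrix.det (Matrix.of fun i j : Fin m =>
      PowerSeries.coeff (n + (j : ℕ)) (PowerSeries.X ^ (i : ℕ) * F)) := by
    rw [← Matrix.det_submatrix_equiv_self (finSumFinEquiv (m := n) (n := m)),
      ← Matrix.fromBlocks_toBlocks (Matrix.submatrix _ finSumFinEquiv finSumFinEquiv)]
    have e11 : (Matrix.submatrix (W.submatrix σ id) (finSumFinEquiv (m := n) (n := m)) finSumFinEquiv).toBlocks₁₁ = 1 := by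
      ext i j
      simp [Matrix.toBlocks₁₁, Matrix.one_apply, W, hσ1, Fin.ext_iff]
    have e21 : (Matrix.submatrix (W.submatrix σ id) (finSumFinEquiv (m := n) (n := m)) finSumFinEquiv).toBlocks₂₁ = 0 := by
      ext i j
      simp [Matrix.toBlocks₂₁, Matrix.one_apply, W, hσ1, hσ2, Fin.ext_iff]
      omega
    rw [e11, e21, Matrix.det_fromBlocks_zero₂₁, Matrix.det_one, one_mul]
    congr 1
    ext i j
    simp [Matrix.toBlocks₂₂, hσ2, W, hS, toep]
  have hs := Matrix.det_permute σ W
  rw [hdW, sign_rot] at hs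
  rw [← hdV, Matrix.det_mul, hT, toep_det _ _ h0, one_mul, hs, ← mul_assoc, ← mul_pow]
  norm_num

lemma ring_choose_eq (y : ℝ) (k : ℕ) : Ring.choose y k = gbinom y k := by
  have h := Ring.descPochhammer_eq_factorial_smul_choose y k
  have h2 : (descPochhammer ℤ k).smeval y = ∏ i ∈ Finset.range k, (y - i) := by
    rw [← Polynomial.aeval_eq_smeval, Polynomial.aeval_def, ← Polynomial.eval_map,
      descPochhammer_map, descPochhammer_eval_eq_prod_range]
  unfold gbinom
  rw [← h2, h, nsmul_eq_mul]
  field_simp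

lemma poch_eq (y : ℝ) (k : ℕ) : poch y k = (-1) ^ k * k.factorial * Ring.choose (-y) k := by
  rw [ring_choose_eq, gbinom, poch]
  have : ∏ i ∈ Finset.range k, (y + i) = (-1) ^ k * ∏ i ∈ Finset.range k, (-y - i) := by
    rw [← Finset.card_range k, ← Finset.prod_const, Finset.card_range, ← Finset.prod_mul_distrib]
    exact Finset.prod_congr rfl fun i _ => by ring
  rw [this]
  field_simp

/-- `(1 - b X)^y` -/
noncomputable def Pw (b y : ℝ) : PowerSeries ℝ :=
  PowerSeries.rescale (-b) (PowerSeries.binomialSeries ℝ y)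

lemma Pw_add (b y z : ℝ) : Pw b (y + z) = Pw b y * Pw b z := by simp [Pw]
lemma Pw_zero (b : ℝ) : Pw b 0 = 1 := by simp [Pw]
lemma Pw_const (b y : ℝ) : PowerSeries.constantCoeff (Pw b y) = 1 := by
  rw [← PowerSeries.coeff_zero_eq_constantCoeff_apply]
  simp [Pw, PowerSeries.coeff_rescale]
lemma Pw_coeff (b y : ℝ) (k : ℕ) : PowerSeries.coeff k (Pw b y) = (-b) ^ k * Ring.choose y k := by
  simp [Pw, PowerSeries.coeff_rescale]
lemma Pw_nat (b : ℝ) (d : ℕ) : Pw b d =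
    (((1 - Polynomial.C b * Polynomial.X) ^ d : Polynomial ℝ) : PowerSeries ℝ) := by
  simp [Pw, PowerSeries.rescale_X, sub_eq_add_neg]
lemma Pw_pow (b y : ℝ) (k : ℕ) : Pw b y ^ k = Pw b (k * y) := by
  induction k with
  | zero => simp [Pw_zero]
  | succ k ih => rw [pow_succ, ih, ← Pw_add]; congr 1; push_cast; ring

/-- `X / (1 - b X)` -/
noncomputable def uu (b : ℝ) : PowerSeries ℝ := PowerSeries.X * Pw b (-1)
lemma uu_pow (b : ℝ) (k : ℕ) : uu b ^ k = PowerSeries.X ^ k * Pw b (-k) := by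
  rw [uu, mul_pow, Pw_pow]; simp
lemma uu_subst (b : ℝ) : PowerSeries.HasSubst (uu b) :=
  PowerSeries.HasSubst.of_constantCoeff_zero' (by simp [uu])

/-- `(1 + u)^x` -/
noncomputable def NN (b x : ℝ) : PowerSeries ℝ :=
  PowerSeries.subst (uu b) (PowerSeries.binomialSeries ℝ x)
lemma NN_add (b x y : ℝ) : NN b (x + y) = NN b x * NN b y := by
  rw [NN, PowerSeries.binomialSeries_add, PowerSeries.subst_mul (uu_subst b)]; rfl
lemma NN_nat (b : ℝ) (d : ℕ) : NN b d = (1 + uu b) ^ d := by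
  rw [NN, PowerSeries.binomialSeries_nat, PowerSeries.subst_pow (uu_subst b),
    PowerSeries.subst_add (uu_subst b), PowerSeries.subst_X (uu_subst b)]
  rw [← PowerSeries.coe_substAlgHom (uu_subst b), map_one]
lemma NN_zero (b : ℝ) : NN b 0 = 1 := by simpa using NN_nat b 0
lemma NN_coeff (b x : ℝ) (k n : ℕ) (h : k ≤ n) : PowerSeries.coeff k (NN b x) =
    ∑ j ∈ Finset.range (n + 1), Ring.choose x j * PowerSeries.coeff k (uu b ^ j) := by
  rw [NN, PowerSeries.coeff_subst' (uu_subst b), finsum_eq_sum_of_support_subset (s := Finset.range (n + 1))]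
  · simp
  · intro j hj
    by_contra hc
    apply hj
    simp only [Finset.coe_range, Set.mem_Iio] at hc
    simp only
    rw [uu_pow, PowerSeries.coeff_X_pow_mul', if_neg (by omega), smul_zero]
lemma NN_const (b x : ℝ) : PowerSeries.constantCoeff (NN b x) = 1 := by
  rw [← PowerSeries.coeff_zero_eq_constantCoeff_apply, NN_coeff b x 0 0 le_rfl]
  simp

lemma meixner_eq (a c x : ℝ) (n : ℕ) : meixner a c n x =
    PowerSeries.coeff n (Pw (1 - 1 / a)⁻¹ (-c) * NN (1 - 1 / a)⁻¹ x) := by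
  set b := (1 - 1 / a)⁻¹ with hb
  have h1 : PowerSeries.coeff n (Pw b (-c) * NN b x) = ∑ j ∈ Finset.range (n + 1),
      Ring.choose x j * PowerSeries.coeff n (Pw b (-c) * uu b ^ j) := by
    simp only [PowerSeries.coeff_mul, Finset.mul_sum]
    rw [Finset.sum_comm]
    refine Finset.sum_congr rfl fun p hp => ?_
    rw [NN_coeff b x p.2 n (by have := Finset.HasAntidiagonal.mem_antidiagonal.1 hp; omega), Finset.mul_sum]
    exact Finset.sum_congr rfl fun j _ => by ring
  rw [h1, meixner, Finset.mul_sum]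
  refine Finset.sum_congr rfl fun j hj => ?_
  have hj : j ≤ n := by simp at hj; omega
  rw [uu_pow, mul_left_comm (Pw b (-c)), ← Pw_add, PowerSeries.coeff_X_pow_mul', if_pos hj, Pw_coeff,
    poch_eq, ring_choose_eq x j, show -(c + (j : ℝ)) = -c + -j by ring,
    show ((j : ℤ) - n) = -((n - j : ℕ) : ℤ) by push_cast [hj]; ring, zpow_neg, zpow_natCast,
    ← inv_pow, ← hb, neg_pow b, Nat.cast_choose ℝ hj]
  have := Nat.factorial_ne_zero n
  have := Nat.factorial_ne_zero j
  have := Nat.factorial_ne_zero (n - j)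
  field_simp

lemma det_comb (n : ℕ) (A : Matrix (Fin n) (Fin n) ℝ) (V W : Fin n → PowerSeries ℝ) (e : Fin n → ℕ)
    (hA : A.det = 1) (h : ∀ i, V i = ∑ k, A i k • W k) :
    Matrix.det (Matrix.of fun i j : Fin n => PowerSeries.coeff (e j) (V i)) =
    Matrix.det (Matrix.of fun i j : Fin n => PowerSeries.coeff (e j) (W i)) := by
  rw [← one_mul (Matrix.det (Matrix.of fun i j : Fin n => PowerSeries.coeff (e j) (W i))), ← hA,
    ← Matrix.det_mul]
  congr 1
  ext i j
  rw [Matrix.mul_apply]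
  simp [h]

lemma side (a c x : ℝ) (n m : ℕ) :
    Matrix.det (Matrix.of fun i j : Fin n => meixner a c (m + (j : ℕ)) (x + (i : ℕ))) =
    Matrix.det (Matrix.of fun i j : Fin n => PowerSeries.coeff (m + (j : ℕ))
      (PowerSeries.X ^ (i : ℕ) *
        (Pw (1 - 1 / a)⁻¹ (-c - n + 1) * NN (1 - 1 / a)⁻¹ x))) := by
  simp only [meixner_eq]
  set b := (1 - 1 / a)⁻¹ with hb
  rw [det_comb n (Matrix.of fun i k : Fin n => ((i : ℕ).choose k : ℝ))
    (fun i => Pw b (-c) * NN b (x + (i : ℕ)))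
    (fun k => uu b ^ (k : ℕ) * (Pw b (-c) * NN b x)) (fun j => m + j)]
  · rw [det_comb n (Matrix.of fun i k : Fin n => PowerSeries.coeff (k : ℕ)
        (PowerSeries.X ^ (i : ℕ) * Pw b ((n - 1 - (i : ℕ) : ℕ) : ℝ)))
      (fun k => uu b ^ (k : ℕ) * (Pw b (-c) * NN b x))
      (fun i => PowerSeries.X ^ (i : ℕ) * (Pw b (-c - n + 1) * NN b x)) (fun j => m + j)]
    · rw [Matrix.det_of_isUpperTriangular]
      · apply Finset.prod_eq_one
        intro i _
        simp [PowerSeries.coeff_X_pow_mul', Pw_const]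
      · intro i j hij
        simp only [id] at hij
        simp only [Matrix.of_apply]
        rw [PowerSeries.coeff_X_pow_mul', if_neg (by simpa using hij)]
    · intro i
      have hi := i.2
      have e1 : uu b ^ (i : ℕ) * (Pw b (-c) * NN b x) =
          (PowerSeries.X ^ (i : ℕ) * Pw b ((n - 1 - (i : ℕ) : ℕ) : ℝ)) *
          (Pw b (-c - n + 1) * NN b x) := by
        have : Pw b (-(i : ℕ)) * Pw b (-c) =
            Pw b ((n - 1 - (i : ℕ) : ℕ) : ℝ) * Pw b (-c - n + 1) := by
          rw [← Pw_add, ← Pw_add]; congr 1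
          rw [Nat.cast_sub (by omega), Nat.cast_sub (by omega)]; push_cast; ring
        rw [uu_pow]
        linear_combination (PowerSeries.X ^ (i : ℕ) * NN b x) * this
      rw [e1]
      have e2 : (PowerSeries.X ^ (i : ℕ) * Pw b ((n - 1 - (i : ℕ) : ℕ) : ℝ)) =
          ∑ k : Fin n, PowerSeries.coeff (k : ℕ)
            (PowerSeries.X ^ (i : ℕ) * Pw b ((n - 1 - (i : ℕ) : ℕ) : ℝ)) •
            (PowerSeries.X ^ (k : ℕ) : PowerSeries ℝ) := by
        rw [Pw_nat]
        set p : Polynomial ℝ := Polynomial.X ^ (i : ℕ) *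
          (1 - Polynomial.C b * Polynomial.X) ^ (n - 1 - (i : ℕ)) with hp
        have hpc : (PowerSeries.X ^ (i : ℕ) * (((1 - Polynomial.C b * Polynomial.X) ^ (n - 1 - (i : ℕ)) : Polynomial ℝ) : PowerSeries ℝ)) = (p : PowerSeries ℝ) := by
          simp [hp]
        rw [hpc]
        have hd : p.natDegree < n := by
          have : p.natDegree ≤ i + (n - 1 - i) * 1 := by
            refine Polynomial.natDegree_mul_le.trans (add_le_add (by simp) ?_)
            refine Polynomial.natDegree_pow_le.trans (Nat.mul_le_mul_left _ ?_)
            compute_degree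
          omega
        simp only [Polynomial.coeff_coe]
        rw [Fin.sum_univ_eq_sum_range (fun k => p.coeff k • (PowerSeries.X ^ k : PowerSeries ℝ)) n]
        ext k
        simp only [Polynomial.coeff_coe, map_sum, map_smul, PowerSeries.coeff_X_pow, smul_eq_mul,
          mul_ite, mul_one, mul_zero, Finset.sum_ite_eq, Finset.mem_range]
        split_ifs with hk
        · rfl
        · exact Polynomial.coeff_eq_zero_of_natDegree_lt (by omega)
      conv_lhs => rw [e2]
      rw [Finset.sum_mul]
      simp
  · rw [Matrix.det_of_isLowerTriangular]
    · simp
    · intro i j hij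
      have : (i : ℕ) < j := by simpa using hij
      simp [Nat.choose_eq_zero_of_lt this]
  · intro i
    simp only [Matrix.of_apply]
    have hi := i.2
    rw [NN_add, NN_nat, add_comm 1 (uu b), add_pow,
      Fin.sum_univ_eq_sum_range (fun k => ((i : ℕ).choose k : ℝ) • (uu b ^ k * (Pw b (-c) * NN b x))) n,
      ← Finset.sum_subset (s₁ := Finset.range ((i : ℕ) + 1)) (s₂ := Finset.range n)]
    · rw [Finset.mul_sum, Finset.mul_sum]
      refine Finset.sum_congr rfl fun k _ => ?_
      rw [Nat.cast_smul_eq_nsmul, nsmul_eq_mul]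
      ring
    · intro t; simp; omega
    · intro k _ hk
      simp at hk
      simp [Nat.choose_eq_zero_of_lt (show (i : ℕ) < k by omega)]

/-- the symmetry of Casorati determinants of Meixner
polynomials. -/
theorem meixner_casorati_symmetry (a : ℝ) (ha0 : a ≠ 0) (ha1 : a ≠ 1)
    (c x : ℝ) (n m : ℕ) :
    Matrix.det (Matrix.of fun i j : Fin n =>
      meixner a (c - n - m) (m + (j : ℕ)) (x + (i : ℕ)))
    = (-1 : ℝ) ^ (n * m) *
      Matrix.det (Matrix.of fun i j : Fin m =>
        meixner a (2 - c) (n + (j : ℕ)) (-x + (i : ℕ))) := by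
  rw [side, side]
  apply dual_jt
  · rw [mul_mul_mul_comm, ← Pw_add, ← NN_add, add_neg_cancel, NN_zero, mul_one, ← Pw_zero (1 - 1 / a)⁻¹]
    congr 1
    ring
  · simp [Pw_const, NN_const]
end

section
/- For real numbers a \notin \{0, -1\} and N, define the normalized Krawtchouk polynomials k_n^{a,N}(x) = \frac{1}{n!} \cdot \frac{(-1)^n a^n}{(1+a)^n} \sum_{j=0}^n (-1)^j \frac{(1+a)^j}{a^j} (N-n)_{n-j} \binom{n}{j} \binom{x}{j} j!. Then for all natural numbers n, m, every real N and every real x: \det\big( k^{a, N+n+m}_{m+j-1}(x+i-1) \big)_{i,j=1}^n = (-1)^{nm} \det\big( k^{a, -N}_{n+j-1}(-x+i-1) \big)_{i,j=1}^m, where the determinant of a 0\times 0 matrix equals 1. -/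
/-- The normalized Krawtchouk polynomial
`k_n^{a,N}(x) = (1/n!) ((-1)^n a^n/(1+a)^n)
  ∑_{j=0}^n (-1)^j ((1+a)^j/a^j) (N-n)_{n-j} C(n,j) C(x,j) j!`. -/
noncomputable def krawtchouk (a N : ℝ) (n : ℕ) (x : ℝ) : ℝ :=
  (1 / n.factorial) * ((-1 : ℝ) ^ n * a ^ n / (1 + a) ^ n) *
    ∑ j ∈ Finset.range (n + 1),
      (-1 : ℝ) ^ j * ((1 + a) ^ j / a ^ j) * poch (N - n) (n - j) *
        (n.choose j : ℝ) * gbinom x j * j.factorial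

theorem kc_choose (x : ℝ) (j : ℕ) : Ring.choose x j = gbinom x j := by
  have h := Ring.descPochhammer_eq_factorial_smul_choose x j
  have h2 : (descPochhammer ℤ j).smeval x = ∏ k ∈ Finset.range j, (x - k) := by
    rw [← Polynomial.aeval_eq_smeval, Polynomial.aeval_def, Polynomial.eval₂_eq_eval_map,
      descPochhammer_map, descPochhammer_eval_eq_prod_range]
  have hf : (j.factorial : ℝ) ≠ 0 := by positivity
  rw [gbinom, ← h2, h, nsmul_eq_mul]
  field_simp

theorem kc_poly (j : ℕ) : ∃ P : Polynomial ℝ, ∀ x, gbinom x j = P.eval x := by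
  refine ⟨(∏ k ∈ Finset.range j, (Polynomial.X - Polynomial.C (k : ℝ))) *
    Polynomial.C ((j.factorial : ℝ)⁻¹), fun x => ?_⟩
  simp [gbinom, Polynomial.eval_prod, div_eq_mul_inv]

/-- the series `(1 + c X)^r`. -/
noncomputable def kcB (c r : ℝ) : PowerSeries ℝ :=
  PowerSeries.rescale c (PowerSeries.binomialSeries ℝ r)

theorem kcB_coeff (c r : ℝ) (n : ℕ) :
    PowerSeries.coeff n (kcB c r) = c ^ n * gbinom r n := by
  simp [kcB, PowerSeries.coeff_rescale, kc_choose]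

theorem kcB_add (c r s : ℝ) : kcB c (r + s) = kcB c r * kcB c s := by
  simp [kcB]

theorem kcB_zero (c : ℝ) : kcB c 0 = 1 := by
  simp [kcB]

theorem kcB_nat (c : ℝ) (d : ℕ) :
    kcB c d = (1 + PowerSeries.C c * PowerSeries.X) ^ d := by
  simp [kcB, PowerSeries.rescale_X]

theorem kc_gen_nat (q M : ℝ) (d : ℕ) :
    kcB (-q) (M - d) * kcB (1 - q) d =
      ∑ j ∈ Finset.range (d + 1), PowerSeries.C (gbinom d j) * PowerSeries.X ^ j *
        kcB (-q) (M - j) := by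
  have h1 : (1 + PowerSeries.C (1 - q) * PowerSeries.X : PowerSeries ℝ) =
      PowerSeries.X + (1 + PowerSeries.C (-q) * PowerSeries.X) := by
    simp; ring
  rw [kcB_nat, h1, add_pow, Finset.mul_sum]
  refine Finset.sum_congr rfl fun j hj => ?_
  have hj' : j ≤ d := by simpa [Nat.lt_succ_iff] using hj
  rw [← kcB_nat, Nat.cast_sub hj']
  have h2 : kcB (-q) (M - j) = kcB (-q) (M - d) * kcB (-q) (d - j) := by
    rw [← kcB_add]; congr 1; ring
  rw [h2, ← kc_choose, Ring.choose_natCast]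
  simp only [map_natCast]
  ring

theorem kc_gen_coeff (q M x : ℝ) (n : ℕ) :
    PowerSeries.coeff n (kcB (-q) (M - x) * kcB (1 - q) x) =
      ∑ j ∈ Finset.range (n + 1), gbinom x j * ((-q) ^ (n - j) * gbinom (M - j) (n - j)) := by
  choose P hP using kc_poly
  have hL : ∀ x, PowerSeries.coeff n (kcB (-q) (M - x) * kcB (1 - q) x) =
      (∑ ij ∈ Finset.HasAntidiagonal.antidiagonal n, (Polynomial.C ((-q) ^ ij.1) *
        (P ij.1).comp (Polynomial.C M - Polynomial.X)) *
        (Polynomial.C ((1 - q) ^ ij.2) * P ij.2)).eval x := by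
    intro x
    rw [PowerSeries.coeff_mul]
    simp only [kcB_coeff, Polynomial.eval_finsetSum, Polynomial.eval_mul, Polynomial.eval_C,
      Polynomial.eval_comp, Polynomial.eval_sub, Polynomial.eval_X, hP]
  have hR : ∀ x, ∑ j ∈ Finset.range (n + 1), gbinom x j *
        ((-q) ^ (n - j) * gbinom (M - j) (n - j)) =
      (∑ j ∈ Finset.range (n + 1), P j * Polynomial.C
        ((-q) ^ (n - j) * gbinom (M - j) (n - j))).eval x := by
    intro x
    simp only [Polynomial.eval_finsetSum, Polynomial.eval_mul, Polynomial.eval_C, ← hP]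
  rw [hL, hR]
  congr 1
  apply Polynomial.eq_of_infinite_eval_eq
  refine Set.Infinite.mono ?_ (Set.infinite_range_of_injective (Nat.cast_injective (R := ℝ)))
  rintro _ ⟨d, rfl⟩
  show _ = _
  rw [← hL, ← hR, kc_gen_nat, map_sum]
  have key : ∀ j, PowerSeries.coeff n (PowerSeries.C (gbinom d j) * PowerSeries.X ^ j *
        kcB (-q) (M - j)) = if j ≤ n then
          gbinom d j * ((-q) ^ (n - j) * gbinom (M - j) (n - j)) else 0 := by
    intro j
    rw [mul_assoc, PowerSeries.coeff_C_mul, PowerSeries.coeff_X_pow_mul']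
    split_ifs <;> simp [kcB_coeff]
  have hz : ∀ j, d < j → gbinom (d : ℝ) j = 0 := by
    intro j hj
    rw [← kc_choose, Ring.choose_natCast, Nat.choose_eq_zero_of_lt hj]; simp
  simp only [key]
  rw [← Finset.sum_filter]
  refine Finset.sum_subset_zero_on_sdiff ?_ ?_ (fun _ _ => rfl)
  · intro j; simp <;> omega
  · intro j hj
    simp at hj
    rw [hz j (by omega), zero_mul]

theorem kc_poch (N : ℝ) (n j : ℕ) (h : j ≤ n) :
    poch (N - n) (n - j) = (n - j).factorial * gbinom (N - 1 - j) (n - j) := by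
  have hf : ((n - j).factorial : ℝ) ≠ 0 := by positivity
  rw [gbinom, mul_div_cancel₀ _ hf, poch, ← Finset.prod_range_reflect]
  refine Finset.prod_congr rfl fun k hk => ?_
  have hk' : k < n - j := by simpa using hk
  have : ((n - j - 1 - k : ℕ) : ℝ) = n - j - 1 - k := by
    have : n = j + 1 + k + (n - j - 1 - k) := by omega
    have := congrArg (Nat.cast (R := ℝ)) this
    push_cast at this
    linarith
  rw [this]; ring

theorem kc_krawtchouk (a : ℝ) (ha0 : a ≠ 0) (ha1 : a ≠ -1) (N x : ℝ) (n : ℕ) :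
    krawtchouk a N n x = PowerSeries.coeff n
      (kcB (-(a / (1 + a))) (N - 1 - x) * kcB (1 - a / (1 + a)) x) := by
  have h1 : 1 + a ≠ 0 := fun h => ha1 (by linarith)
  rw [kc_gen_coeff, krawtchouk, Finset.mul_sum]
  refine Finset.sum_congr rfl fun j hj => ?_
  have hj' : j ≤ n := by simpa [Nat.lt_succ_iff] using hj
  rw [kc_poch _ _ _ hj']
  obtain ⟨k, rfl⟩ := Nat.exists_eq_add_of_le hj'
  have h3 : (((j + k).choose j : ℕ) : ℝ) * j.factorial * k.factorial = (j + k).factorial := by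
    have := Nat.choose_mul_factorial_mul_factorial (Nat.le_add_right j k)
    rw [Nat.add_sub_cancel_left] at this
    exact_mod_cast this
  have hf : ((j + k).factorial : ℝ) ≠ 0 := by positivity
  rw [Nat.add_sub_cancel_left]
  have h4 : (-1 : ℝ) ^ (j + k) * a ^ (j + k) / (1 + a) ^ (j + k) *
      ((-1) ^ j * ((1 + a) ^ j / a ^ j)) = (-(a / (1 + a))) ^ k := by
    have : (-1 : ℝ) ^ j * (-1) ^ j = 1 := by rw [← mul_pow]; simp
    rw [neg_pow (a / (1 + a)), div_pow, pow_add, pow_add, pow_add]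
    field_simp
    linear_combination this
  rw [← h4]
  generalize gbinom (N - 1 - j) k = G
  generalize gbinom x j = H
  calc _ = (1 / ((j + k).factorial : ℝ)) * ((((j + k).choose j : ℕ) : ℝ) * j.factorial * k.factorial) *
      (H * ((-1 : ℝ) ^ (j + k) * a ^ (j + k) / (1 + a) ^ (j + k) *
      ((-1) ^ j * ((1 + a) ^ j / a ^ j)) * G)) := by ring
    _ = _ := by rw [h3]; field_simp

theorem kc_det_basis (A B : PowerSeries ℝ) (hA : PowerSeries.constantCoeff A = 1)
    (hAB : B = A + PowerSeries.X) (n : ℕ) :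
    Matrix.det (Matrix.of fun i j : Fin n =>
      PowerSeries.coeff (j : ℕ) (A ^ (n - 1 - (i : ℕ)) * B ^ (i : ℕ))) = 1 := by
  induction n with
  | zero => simp
  | succ n ih =>
    rw [Matrix.det_eq_of_forall_row_eq_smul_add_pred (B := Matrix.of fun i j : Fin (n + 1) =>
      Fin.cases (PowerSeries.coeff (j : ℕ) (A ^ n)) (fun i : Fin n =>
        PowerSeries.coeff (j : ℕ) (PowerSeries.X * (A ^ (n - 1 - (i : ℕ)) * B ^ (i : ℕ)))) i)
      (fun _ => 1) (by simp)]
    · rw [Matrix.det_succ_column_zero, Fin.sum_univ_succ, Finset.sum_eq_zero]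
      · simp only [Matrix.of_apply, Fin.cases_zero, Fin.val_zero, pow_zero, one_mul, add_zero]
        rw [← ih]
        have : PowerSeries.coeff 0 (A ^ n) = 1 := by simp [hA]
        rw [this, one_mul]
        congr 1
        ext i j
        simp [PowerSeries.coeff_succ_X_mul]
      · intro i _
        simp
    · intro i j
      simp only [Matrix.of_apply, Fin.cases_succ, Fin.val_succ, Fin.val_castSucc, one_mul]
      rw [← map_add]
      congr 1
      obtain ⟨k, hk⟩ : ∃ k, n = i + 1 + k := ⟨n - (i + 1), by omega⟩
      have e1 : n + 1 - 1 - ((i : ℕ) + 1) = k := by omega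
      have e2 : n - 1 - (i : ℕ) = k := by omega
      have e3 : n + 1 - 1 - (i : ℕ) = k + 1 := by omega
      rw [e1, e2, e3, pow_succ, pow_succ, hAB]
      ring

/-- Toeplitz matrix -/
noncomputable def kcT (f : PowerSeries ℝ) (s n : ℕ) : Matrix (Fin n) (Fin n) ℝ :=
  Matrix.of fun i j => PowerSeries.coeff (s + (j : ℕ)) (PowerSeries.X ^ (i : ℕ) * f)

theorem kc_coeff_mul_trunc (P f : PowerSeries ℝ) (n k : ℕ)
    (hP : ∀ l, n ≤ l → l ≤ k → PowerSeries.coeff l P = 0) :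
    PowerSeries.coeff k (P * f) = ∑ l : Fin n, PowerSeries.coeff (l : ℕ) P *
      PowerSeries.coeff k (PowerSeries.X ^ (l : ℕ) * f) := by
  rw [PowerSeries.coeff_mul, Finset.Nat.sum_antidiagonal_eq_sum_range_succ_mk,
    Fin.sum_univ_eq_sum_range (fun l => PowerSeries.coeff l P *
      PowerSeries.coeff k (PowerSeries.X ^ l * f))]
  simp only [PowerSeries.coeff_X_pow_mul', mul_ite, mul_zero]
  rw [← Finset.sum_filter]
  symm
  refine Finset.sum_subset_zero_on_sdiff ?_ ?_ (fun _ _ => rfl)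
  · intro j; simp <;> omega
  · intro j hj
    simp at hj
    rw [hP j (by omega) (by omega), zero_mul]

theorem kc_poly_coeff (q p : ℝ) (n l i : ℕ) (hi : i < n) (h : n ≤ l) :
    PowerSeries.coeff l ((1 + PowerSeries.C q * PowerSeries.X) ^ (n - 1 - i) *
      (1 + PowerSeries.C p * PowerSeries.X) ^ i) = 0 := by
  have : ((1 + PowerSeries.C q * PowerSeries.X) ^ (n - 1 - i) *
      (1 + PowerSeries.C p * PowerSeries.X) ^ i : PowerSeries ℝ) =
      (((1 + Polynomial.C q * Polynomial.X) ^ (n - 1 - i) *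
      (1 + Polynomial.C p * Polynomial.X) ^ i : Polynomial ℝ) : PowerSeries ℝ) := by
    simp
  rw [this, Polynomial.coeff_coe]
  apply Polynomial.coeff_eq_zero_of_natDegree_lt
  refine lt_of_le_of_lt (b := (n - 1 - i) * 1 + i * 1) ?_ (by omega)
  have hd : ∀ c : ℝ, (1 + Polynomial.C c * Polynomial.X : Polynomial ℝ).natDegree ≤ 1 := by
    intro c; compute_degree
  exact Polynomial.natDegree_mul_le_of_le (Polynomial.natDegree_pow_le_of_le _ (hd q))
    (Polynomial.natDegree_pow_le_of_le _ (hd p))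

theorem kc_det_T (q M x : ℝ) (s n : ℕ) :
    Matrix.det (Matrix.of fun i j : Fin n => PowerSeries.coeff (s + (j : ℕ))
      (kcB (-q) (M + n - 1 - (x + (i : ℕ))) * kcB (1 - q) (x + (i : ℕ)))) =
    (kcT (kcB (-q) (M - x) * kcB (1 - q) x) s n).det := by
  have hb := kc_det_basis (1 + PowerSeries.C (-q) * PowerSeries.X)
    (1 + PowerSeries.C (1 - q) * PowerSeries.X) (by simp) (by simp; ring) n
  refine Eq.trans ?_ ((Matrix.det_mul _ _).trans ((congrArg (· * Matrix.det (kcT _ s n)) hb).trans (one_mul _)))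
  congr 1
  ext i j
  rw [Matrix.mul_apply]
  simp only [Matrix.of_apply, kcT]
  rw [← kc_coeff_mul_trunc _ _ _ _ (fun l h _ => kc_poly_coeff _ _ _ _ _ i.2 h)]
  congr 1
  rw [← kcB_nat, ← kcB_nat, kcB_add]
  have : kcB (-q) (M + n - 1 - (x + (i : ℕ))) = kcB (-q) ((n - 1 - (i : ℕ) : ℕ)) * kcB (-q) (M - x) := by
    rw [← kcB_add]
    congr 1
    have : n = (n - 1 - (i : ℕ)) + 1 + i := by omega
    have := congrArg (Nat.cast (R := ℝ)) this
    push_cast at this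
    linarith
  rw [this]
  ring

theorem kc_rot (k m : ℕ) (i : Fin (k + 1)) :
    (((finRotate (k + 1)) ^ m) i : ℕ) = (i + m) % (k + 1) := by
  induction m with
  | zero => simp [Nat.mod_eq_of_lt i.2]
  | succ m ih =>
    rw [pow_succ', Equiv.Perm.mul_apply, finRotate_apply, Fin.val_add, ih]
    simp [Nat.add_assoc]

theorem kc_sign (n m : ℕ) (σ : Equiv.Perm (Fin (n + m)))
    (hσ : ∀ i, (σ i : ℕ) = (i + m) % (n + m)) : Equiv.Perm.sign σ = (-1) ^ (n * m) := by
  rcases Nat.eq_zero_or_pos (n + m) with h | h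
  · obtain ⟨rfl, rfl⟩ : n = 0 ∧ m = 0 := by omega
    have : σ = 1 := by ext i; exact absurd i.2 (by simp)
    rw [this]; simp
  · obtain ⟨k, hk⟩ : ∃ k, n + m = k + 1 := ⟨n + m - 1, by omega⟩
    have key : ∀ (L : ℕ) (hL : L = k + 1) (σ : Equiv.Perm (Fin L)),
        (∀ i, (σ i : ℕ) = (i + m) % L) → Equiv.Perm.sign σ = (-1) ^ (k * m) := by
      rintro L rfl σ hσ
      have : σ = (finRotate (k + 1)) ^ m := by
        ext i; rw [hσ, kc_rot]
      rw [this, map_pow, sign_finRotate, ← pow_mul]; simp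
    rw [key _ hk σ hσ]
    rcases Nat.eq_zero_or_pos m with rfl | hm
    · simp
    · have e : k * m = n * m + (m - 1) * m := by
        rw [← add_mul]; congr 1; omega
      have : Even ((m - 1) * m) := by
        obtain ⟨t, rfl⟩ : ∃ t, m = t + 1 := ⟨m - 1, by omega⟩
        exact Nat.even_mul_succ_self t
      rw [e, pow_add, this.neg_one_pow, mul_one]

theorem kc_T_mul (f g : PowerSeries ℝ) (hfg : f * g = 1) (L : ℕ) : kcT f 0 L * kcT g 0 L = 1 := by
  ext i j
  rw [Matrix.mul_apply]
  simp only [kcT, Matrix.of_apply, zero_add]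
  rw [← kc_coeff_mul_trunc _ _ _ _ (fun l h h' => by omega), mul_assoc, hfg, mul_one,
    PowerSeries.coeff_X_pow, Matrix.one_apply]
  simp [Fin.ext_iff, eq_comm]

theorem kc_T_det (f : PowerSeries ℝ) (hf : PowerSeries.constantCoeff f = 1) (L : ℕ) :
    (kcT f 0 L).det = 1 := by
  rw [Matrix.det_of_isUpperTriangular]
  · simp [kcT, PowerSeries.coeff_X_pow_mul', hf]
  · intro i j h
    have : (j : ℕ) < i := h
    simp [kcT, PowerSeries.coeff_X_pow_mul']
    omega

theorem kc_dual (f g : PowerSeries ℝ) (hfg : f * g = 1)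
    (hf : PowerSeries.constantCoeff f = 1) (n m : ℕ) :
    (kcT f m n).det = (-1) ^ (n * m) * (kcT g n m).det := by
  let e1 : Fin n ⊕ Fin m ≃ Fin (n + m) := finSumFinEquiv
  let e2 : Fin n ⊕ Fin m ≃ Fin (n + m) :=
    (Equiv.sumComm _ _).trans (finSumFinEquiv.trans (finCongr (Nat.add_comm m n)))
  have e1l : ∀ i, (e1 (Sum.inl i) : ℕ) = i := fun i => by simp [e1]
  have e1r : ∀ i, (e1 (Sum.inr i) : ℕ) = n + i := fun i => by simp [e1]
  have e2l : ∀ i, (e2 (Sum.inl i) : ℕ) = m + i := fun i => by simp [e2, Nat.add_comm]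
  have e2r : ∀ i, (e2 (Sum.inr i) : ℕ) = i := fun i => by simp [e2]
  set U := kcT f 0 (n + m) with hU
  set V := kcT g 0 (n + m) with hV
  have hUV : U.submatrix e1 e2 * V.submatrix e2 e1 = 1 := by
    rw [Matrix.submatrix_mul_equiv, kc_T_mul f g hfg]; simp
  have hdet : (U.submatrix e1 e2).det = (-1) ^ (n * m) := by
    have : U.submatrix e1 e2 = (U.submatrix id (e1.symm.trans e2)).submatrix e1 e1 := by
      ext i j; simp
    rw [this, Matrix.det_submatrix_equiv_self, Matrix.det_permute', kc_T_det f hf,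
      kc_sign n m]
    · simp
    · intro i
      obtain ⟨i, rfl⟩ := e1.surjective i
      rcases i with i | i
      · simp only [Equiv.trans_apply, Equiv.symm_apply_apply, e2l, e1l]
        rw [Nat.mod_eq_of_lt (by omega)]; omega
      · simp only [Equiv.trans_apply, Equiv.symm_apply_apply, e2r, e1r]
        rw [show n + (i : ℕ) + m = i + (n + m) by omega, Nat.add_mod_right,
          Nat.mod_eq_of_lt (by omega)]
  set U' := U.submatrix e1 e2 with hU'
  set V' := V.submatrix e2 e1 with hV'
  have hP : U'.toBlocks₁₁ = kcT f m n := by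
    ext i j
    simp [Matrix.toBlocks₁₁, hU', hU, kcT, e1l, e2l]
  have hW : V'.toBlocks₂₂ = kcT g n m := by
    ext i j
    simp [Matrix.toBlocks₂₂, hV', hV, kcT, e1r, e2r]
  rw [← hdet, ← hP, ← hW]
  have hb := hUV
  rw [← Matrix.fromBlocks_toBlocks U', ← Matrix.fromBlocks_toBlocks V',
    Matrix.fromBlocks_multiply, ← Matrix.fromBlocks_one, Matrix.fromBlocks_inj] at hb
  obtain ⟨-, h12, -, h22⟩ := hb
  have hmul : U' * Matrix.fromBlocks 1 V'.toBlocks₁₂ 0 V'.toBlocks₂₂ =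
      Matrix.fromBlocks U'.toBlocks₁₁ 0 U'.toBlocks₂₁ 1 := by
    conv_lhs => rw [← Matrix.fromBlocks_toBlocks U']
    rw [Matrix.fromBlocks_multiply, h12, h22]
    simp
  have := congrArg Matrix.det hmul
  rw [Matrix.det_mul, Matrix.det_fromBlocks_zero₂₁, Matrix.det_fromBlocks_zero₁₂] at this
  simpa using this.symm

/-- the symmetry of Casorati determinants of Krawtchouk
polynomials. -/
theorem krawtchouk_casorati_symmetry (a : ℝ) (ha0 : a ≠ 0) (ha1 : a ≠ -1)
    (N x : ℝ) (n m : ℕ) :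
    Matrix.det (Matrix.of fun i j : Fin n =>
      krawtchouk a (N + n + m) (m + (j : ℕ)) (x + (i : ℕ)))
    = (-1 : ℝ) ^ (n * m) *
      Matrix.det (Matrix.of fun i j : Fin m =>
        krawtchouk a (-N) (n + (j : ℕ)) (-x + (i : ℕ))) := by
  simp only [kc_krawtchouk a ha0 ha1]
  have h1 := kc_det_T (a / (1 + a)) (N + m) x m n
  have h2 := kc_det_T (a / (1 + a)) (-N - m) (-x) n m
  rw [show N + (m : ℝ) + n - 1 = N + n + m - 1 by ring] at h1
  rw [show -N - (m : ℝ) + m - 1 = -N - 1 by ring] at h2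
  rw [h1, h2]
  apply kc_dual
  · rw [mul_mul_mul_comm, ← kcB_add, ← kcB_add]
    rw [show N + (m : ℝ) - x + (-N - m - -x) = 0 by ring, add_neg_cancel, kcB_zero, kcB_zero,
      mul_one]
  · rw [← PowerSeries.coeff_zero_eq_constantCoeff_apply, PowerSeries.coeff_mul]
    simp [kcB]
end
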